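/- arXiv:2605.13609 — 2 statements merged into one kernel-verified Lean document; each statement's English description precedes it below -/
import Mathlib

section
/- Let n be a positive integer, L an n×n real symmetric positive definite matrix, √(L⁻¹) the unique symmetric positive definite square root of L⁻¹, a ∈ ℝⁿ nonzero, g ∈ ℝⁿ, τ > 0, and c ∈ ℝ; set b̂ = √(L⁻¹)a / ‖√(L⁻¹)a‖. Then the function F(δ) = g·δ + (1/(4τ)) (Lδ)·δ attains a unique minimum over the affine set {δ ∈ ℝⁿ : a·δ = c}, and the minimizer is δ* = −2τ √(L⁻¹) (I − b̂⊗b̂) √(L⁻¹) g + c · L⁻¹a / ‖√(L⁻¹)a‖², where b̂⊗b̂ denotes the outer product (rank-one) matrix and I the n×n identity. -/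
open Matrix

/-- The incremental objective `F(δ) = g·δ + (1/(4τ))(Lδ)·δ` attains a unique minimum over
the affine set `{δ : a·δ = c}`, at
`δ* = −2τ √(L⁻¹)(I − b̂⊗b̂)√(L⁻¹) g + c L⁻¹a/‖√(L⁻¹)a‖²`, where `b̂ = √(L⁻¹)a/‖√(L⁻¹)a‖`
and `S = √(L⁻¹)` is the unique symmetric positive definite square root of `L⁻¹`. -/
theorem global_mass_balance_unique_minimizer (n : ℕ) (hn : 0 < n)
    (L S : Matrix (Fin n) (Fin n) ℝ) (hL : L.PosDef)
    (hS : S.PosDef) (hSS : S * S = L⁻¹)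
    (a : Fin n → ℝ) (ha : a ≠ 0) (g : Fin n → ℝ) (τ : ℝ) (hτ : 0 < τ) (c : ℝ) :
    let F : (Fin n → ℝ) → ℝ := fun δ => g ⬝ᵥ δ + (1 / (4 * τ)) * (L.mulVec δ ⬝ᵥ δ)
    let nrm2 : ℝ := S.mulVec a ⬝ᵥ S.mulVec a
    let bhat : Fin n → ℝ := (Real.sqrt nrm2)⁻¹ • S.mulVec a
    let δstar : Fin n → ℝ :=
      (-(2 * τ)) • (S * ((1 : Matrix (Fin n) (Fin n) ℝ) - vecMulVec bhat bhat) * S).mulVec g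
        + (c / nrm2) • L⁻¹.mulVec a
    a ⬝ᵥ δstar = c ∧ ∀ δ : Fin n → ℝ, a ⬝ᵥ δ = c → δ ≠ δstar → F δstar < F δ := by
  intro F nrm2 bhat δstar
  have hST : Sᵀ = S := by simpa using hS.isHermitian.eq
  have hLT : Lᵀ = L := by simpa using hL.isHermitian.eq
  have hdet : IsUnit L.det := isUnit_iff_ne_zero.mpr hL.det_pos.ne'
  have hLM : ∀ v : Fin n → ℝ, L *ᵥ (L⁻¹ *ᵥ v) = v := fun v => by
    rw [mulVec_mulVec, mul_nonsing_inv _ hdet, one_mulVec]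
  have hsymS : ∀ u v : Fin n → ℝ, (S *ᵥ u) ⬝ᵥ v = u ⬝ᵥ (S *ᵥ v) := fun u v => by
    rw [dotProduct_mulVec, ← mulVec_transpose, hST]
  have hsymL : ∀ u v : Fin n → ℝ, (L *ᵥ u) ⬝ᵥ v = u ⬝ᵥ (L *ᵥ v) := fun u v => by
    rw [dotProduct_mulVec, ← mulVec_transpose, hLT]
  have hSSv : ∀ v : Fin n → ℝ, S *ᵥ (S *ᵥ v) = L⁻¹ *ᵥ v := fun v => by
    rw [mulVec_mulVec, hSS]
  have hN : nrm2 = a ⬝ᵥ (L⁻¹ *ᵥ a) := by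
    simp only [nrm2]
    rw [hsymS, hSSv]
  have hNpos : 0 < nrm2 := by
    rw [hN]
    have := hL.inv.dotProduct_mulVec_pos ha
    simpa using this
  have hsq : (Real.sqrt nrm2)⁻¹ * (Real.sqrt nrm2)⁻¹ = nrm2⁻¹ := by
    rw [← mul_inv, Real.mul_self_sqrt hNpos.le]
  obtain ⟨k, hk⟩ : ∃ k, k = 2 * τ * (a ⬝ᵥ (L⁻¹ *ᵥ g)) / nrm2 + c / nrm2 := ⟨_, rfl⟩
  have hb : bhat ⬝ᵥ (S *ᵥ g) = (Real.sqrt nrm2)⁻¹ * (a ⬝ᵥ (L⁻¹ *ᵥ g)) := by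
    simp only [bhat]
    rw [smul_dotProduct, hsymS, hSSv, smul_eq_mul]
  have hSb : S *ᵥ bhat = (Real.sqrt nrm2)⁻¹ • (L⁻¹ *ᵥ a) := by
    simp only [bhat]
    rw [mulVec_smul, hSSv]
  have hd : δstar = (-(2 * τ)) • (L⁻¹ *ᵥ g) + k • (L⁻¹ *ᵥ a) := by
    have h1 : (S * ((1 : Matrix (Fin n) (Fin n) ℝ) - vecMulVec bhat bhat) * S) *ᵥ g
        = L⁻¹ *ᵥ g - ((a ⬝ᵥ (L⁻¹ *ᵥ g)) / nrm2) • (L⁻¹ *ᵥ a) := by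
      have h2 : vecMulVec bhat bhat *ᵥ (S *ᵥ g) = (bhat ⬝ᵥ (S *ᵥ g)) • bhat := by
        rw [vecMulVec_mulVec]; simp
      rw [← mulVec_mulVec, ← mulVec_mulVec, sub_mulVec, one_mulVec, h2, mulVec_sub, hSSv,
        mulVec_smul, hSb, hb, smul_smul]
      congr 2
      rw [div_eq_mul_inv, ← hsq]; ring
    simp only [δstar]
    rw [h1, hk]
    module
  have hfeas : a ⬝ᵥ δstar = c := by
    rw [hd, dotProduct_add, dotProduct_smul, dotProduct_smul, ← hN, hk]
    simp only [smul_eq_mul]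
    have := hNpos.ne'
    field_simp
    ring
  refine ⟨hfeas, fun δ hδ hne => ?_⟩
  obtain ⟨e, he⟩ : ∃ e, e = δ - δstar := ⟨_, rfl⟩
  have hδe : δ = δstar + e := by rw [he]; abel
  have hae : a ⬝ᵥ e = 0 := by rw [he, dotProduct_sub, hδ, hfeas, sub_self]
  have hene : e ≠ 0 := by rw [he]; exact sub_ne_zero.mpr hne
  have hpos : 0 < (L *ᵥ e) ⬝ᵥ e := by
    have := hL.dotProduct_mulVec_pos hene
    rw [hsymL]
    simpa using this
  have hLd : (L *ᵥ δstar) ⬝ᵥ e = -(2 * τ) * (g ⬝ᵥ e) := by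
    rw [hd, mulVec_add, mulVec_smul, mulVec_smul, hLM, hLM, add_dotProduct, smul_dotProduct,
      smul_dotProduct, hae]
    simp
  have hcross : (L *ᵥ e) ⬝ᵥ δstar = -(2 * τ) * (g ⬝ᵥ e) := by
    rw [hsymL, dotProduct_comm, hLd]
  clear_value δstar
  have hF : F δ = F δstar + (1 / (4 * τ)) * ((L *ᵥ e) ⬝ᵥ e) := by
    simp only [F]
    rw [hδe, mulVec_add]
    simp only [dotProduct_add, add_dotProduct]
    rw [
      hLd, hcross]
    field_simp
    ring
  rw [hF]
  have : 0 < (1 / (4 * τ)) * ((L *ᵥ e) ⬝ᵥ e) := by positivity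
  linarith
end

section
/- Let n be a positive integer, L an n×n real symmetric positive definite matrix, √(L⁻¹) the unique symmetric positive definite square root of L⁻¹, a ∈ ℝⁿ nonzero, g ∈ ℝⁿ, τ > 0, and c ∈ ℝ; set b̂ = √(L⁻¹)a / ‖√(L⁻¹)a‖. Then the Karush–Kuhn–Tucker system in the unknowns (δ, λ) ∈ ℝⁿ × ℝ given by { a·δ = c ; g + (1/(2τ)) Lδ + λ a = 0 } has a unique solution, namely λ = −( a·(L⁻¹g) + c/(2τ) ) / ‖√(L⁻¹)a‖² and δ = −2τ √(L⁻¹) (I − b̂⊗b̂) √(L⁻¹) g + c · L⁻¹a / ‖√(L⁻¹)a‖². -/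
open Matrix

/-- The KKT system `{ a·δ = c ; g + (1/(2τ))Lδ + λa = 0 }` of the incremental growth
problem with global mass balance has the unique solution
`λ = −(a·(L⁻¹g) + c/(2τ))/‖√(L⁻¹)a‖²` and
`δ = −2τ √(L⁻¹)(I − b̂⊗b̂)√(L⁻¹) g + c L⁻¹a/‖√(L⁻¹)a‖²`,
where `S = √(L⁻¹)` is the unique symmetric positive definite square root of `L⁻¹`. -/
theorem global_mass_balance_KKT_unique (n : ℕ) (hn : 0 < n)
    (L S : Matrix (Fin n) (Fin n) ℝ) (hL : L.PosDef)
    (hS : S.PosDef) (hSS : S * S = L⁻¹)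
    (a : Fin n → ℝ) (ha : a ≠ 0) (g : Fin n → ℝ) (τ : ℝ) (hτ : 0 < τ) (c : ℝ) :
    let nrm2 : ℝ := S.mulVec a ⬝ᵥ S.mulVec a
    let bhat : Fin n → ℝ := (Real.sqrt nrm2)⁻¹ • S.mulVec a
    let δstar : Fin n → ℝ :=
      (-(2 * τ)) • (S * ((1 : Matrix (Fin n) (Fin n) ℝ) - vecMulVec bhat bhat) * S).mulVec g
        + (c / nrm2) • L⁻¹.mulVec a
    let lamstar : ℝ := -((a ⬝ᵥ L⁻¹.mulVec g + c / (2 * τ)) / nrm2)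
    ∀ (δ : Fin n → ℝ) (lam : ℝ),
      (a ⬝ᵥ δ = c ∧ g + (1 / (2 * τ)) • L.mulVec δ + lam • a = 0) ↔
        (δ = δstar ∧ lam = lamstar) := by
  intro nrm2 bhat δstar lamstar δ lam
  have hdet : IsUnit L.det := (Matrix.isUnit_iff_isUnit_det L).1 hL.isUnit
  have hST : Sᵀ = S := by
    have h := hS.isHermitian.eq
    rwa [Matrix.conjTranspose_eq_transpose_of_trivial] at h
  have hdot : ∀ x y : Fin n → ℝ, S.mulVec x ⬝ᵥ S.mulVec y = x ⬝ᵥ L⁻¹.mulVec y := by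
    intro x y
    rw [← hSS, ← Matrix.mulVec_mulVec, Matrix.dotProduct_mulVec x, ← Matrix.mulVec_transpose, hST]
  have hSa : S.mulVec a ≠ 0 := by
    intro h
    exact ha (Matrix.mulVec_injective_of_isUnit hS.isUnit (by simpa using h))
  have hN0 : 0 ≤ nrm2 := Finset.sum_nonneg fun i _ => mul_self_nonneg _
  have hNne : nrm2 ≠ 0 := fun h => hSa (dotProduct_self_eq_zero.1 h)
  have hN : a ⬝ᵥ L⁻¹.mulVec a = nrm2 := (hdot a a).symm
  have hsq : (Real.sqrt nrm2)⁻¹ * (Real.sqrt nrm2)⁻¹ = nrm2⁻¹ := by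
    rw [← mul_inv, Real.mul_self_sqrt hN0]
  have hP : (S * ((1 : Matrix (Fin n) (Fin n) ℝ) - vecMulVec bhat bhat) * S).mulVec g
      = L⁻¹.mulVec g - ((a ⬝ᵥ L⁻¹.mulVec g) / nrm2) • L⁻¹.mulVec a := by
    have h1 : (vecMulVec bhat bhat).mulVec (S.mulVec g)
        = ((a ⬝ᵥ L⁻¹.mulVec g) / nrm2) • S.mulVec a := by
      rw [← hdot a g]
      ext i
      simp only [Matrix.vecMulVec_mulVec, bhat, smul_dotProduct, Pi.smul_apply, smul_eq_mul,
        MulOpposite.smul_eq_mul_unop, MulOpposite.unop_op, div_eq_mul_inv, ← hsq]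
      ring
    rw [← Matrix.mulVec_mulVec, ← Matrix.mulVec_mulVec, Matrix.sub_mulVec, Matrix.one_mulVec, h1,
      Matrix.mulVec_sub, Matrix.mulVec_smul, Matrix.mulVec_mulVec, Matrix.mulVec_mulVec, hSS]
  have hδ : δstar = (-(2 * τ)) • (L⁻¹.mulVec g + lamstar • L⁻¹.mulVec a) := by
    simp only [δstar, hP, lamstar]
    ext i
    simp only [Pi.add_apply, Pi.smul_apply, Pi.sub_apply, smul_eq_mul]
    field_simp
    ring
  have hLi : ∀ x : Fin n → ℝ, L.mulVec (L⁻¹.mulVec x) = x := fun x => by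
    rw [Matrix.mulVec_mulVec, Matrix.mul_nonsing_inv _ hdet, Matrix.one_mulVec]
  have hiL : ∀ x : Fin n → ℝ, L⁻¹.mulVec (L.mulVec x) = x := fun x => by
    rw [Matrix.mulVec_mulVec, Matrix.nonsing_inv_mul _ hdet, Matrix.one_mulVec]
  have hdotδ : ∀ l : ℝ, a ⬝ᵥ ((-(2 * τ)) • (L⁻¹.mulVec g + l • L⁻¹.mulVec a))
      = -(2 * τ) * (a ⬝ᵥ L⁻¹.mulVec g + l * nrm2) := fun l => by
    rw [dotProduct_smul, dotProduct_add, dotProduct_smul, hN, smul_eq_mul, smul_eq_mul]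
  constructor
  · rintro ⟨h1, h2⟩
    have h3 : δ = (-(2 * τ)) • (L⁻¹.mulVec g + lam • L⁻¹.mulVec a) := by
      have h4 := congrArg (fun v => L⁻¹.mulVec v) h2
      simp only [Matrix.mulVec_add, Matrix.mulVec_smul, hiL, Matrix.mulVec_zero] at h4
      ext i
      have h5 := congrFun h4 i
      simp only [Pi.add_apply, Pi.smul_apply, smul_eq_mul, Pi.zero_apply] at h5 ⊢
      field_simp at h5
      linarith
    have hl : lam = lamstar := by
      rw [h3, hdotδ] at h1
      simp only [lamstar, ← h1]
      field_simp
      ring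
    exact ⟨by rw [hδ, ← hl]; exact h3, hl⟩
  · rintro ⟨h1, h2⟩
    rw [h1, h2, hδ]
    constructor
    · rw [hdotδ]
      simp only [lamstar]
      field_simp
      ring
    · rw [Matrix.mulVec_smul, Matrix.mulVec_add, Matrix.mulVec_smul, hLi, hLi]
      ext i
      simp only [Pi.add_apply, Pi.smul_apply, smul_eq_mul, Pi.zero_apply]
      field_simp
      ring
end
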